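/- The strong separation condition fails for {S_i}_{i=1}^m if and only if there exists an infinite directed path in the graph G starting from a point of Λ, i.e., there exist v ∈ Λ and a function f : ℕ → Ξ with f(0) = v and an edge of G from f(n) to f(n+1) for every n. -/

import Mathlib

open Polynomial Filter

noncomputable section

namespace PVOSC

variable {m : ℕ}

/-- `λ⁻¹` is a Pisot (P.V.) number: an algebraic integer `> 1` all of whose
Galois conjugates other than itself have complex absolute value `< 1`. -/
def IsPisot (θ : ℝ) : Prop :=
  1 < θ ∧ IsIntegral ℤ θ ∧
    ∀ z : ℂ, aeval z (minpoly ℤ θ) = 0 → z ≠ (θ : ℂ) → ‖z‖ < 1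

/-- `p_σ` for a finite word `σ`. -/
def wordP (p : Fin m → ℕ) (σ : List (Fin m)) : ℕ := (σ.map p).sum

/-- The contracting similitude `S_i(x) = λ^{p_i} x + b_i`. -/
def Smap (lam : ℝ) (p : Fin m → ℕ) (b : Fin m → ℝ) (i : Fin m) : ℝ → ℝ :=
  fun x => lam ^ p i * x + b i

/-- `S_σ = S_{i₁} ∘ ⋯ ∘ S_{i_k}` for `σ = i₁ ⋯ i_k`. -/
def SW (lam : ℝ) (p : Fin m → ℕ) (b : Fin m → ℝ) (σ : List (Fin m)) : ℝ → ℝ :=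
  σ.foldr (fun i f => Smap lam p b i ∘ f) id

/-- `b_σ`, the translation part of `S_σ`. -/
def wordB (lam : ℝ) (p : Fin m → ℕ) (b : Fin m → ℝ) (σ : List (Fin m)) : ℝ :=
  SW lam p b σ 0

/-- `B = {0, b₁, …, b_m}`. -/
def Bset (b : Fin m → ℝ) : Set ℝ := insert 0 (Set.range b)

/-- `B − B`. -/
def BB (b : Fin m → ℝ) : Set ℝ := {x | ∃ u ∈ Bset b, ∃ v ∈ Bset b, x = u - v}

/-- `max_i |b_i|`. -/
def bmax (b : Fin m → ℝ) : ℝ := ⨆ i, |b i|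

/-- The set `𝒞`. -/
def Cset (lam : ℝ) (b : Fin m → ℝ) (T : ℕ) : Set ℝ :=
  {x | |x| ≤ (1 + lam ^ (1 - (T : ℤ))) * bmax b / (1 - lam) ∧
    ∃ R : ℝ[X], (∀ n, R.coeff n ∈ BB b) ∧ lam ^ (2 - (T : ℤ)) * x = R.eval lam⁻¹}

/-- The vertex set `Ξ = {n ∈ ℤ : |n| ≤ T−1} × 𝒞`. -/
def Xi (lam : ℝ) (b : Fin m → ℝ) (T : ℕ) : Set (ℤ × ℝ) :=
  {v | |v.1| ≤ (T : ℤ) - 1 ∧ v.2 ∈ Cset lam b T}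

/-- The open set condition. -/
def OSC (lam : ℝ) (p : Fin m → ℕ) (b : Fin m → ℝ) : Prop :=
  ∃ U : Set ℝ, U.Nonempty ∧ IsOpen U ∧ (⋃ i, Smap lam p b i '' U) ⊆ U ∧
    ∀ i j : Fin m, i ≠ j → Smap lam p b i '' U ∩ Smap lam p b j '' U = ∅

/-- The strong separation condition for the attractor `E`. -/
def SSC (lam : ℝ) (p : Fin m → ℕ) (b : Fin m → ℝ) (E : Set ℝ) : Prop :=
  ∀ i j : Fin m, i ≠ j → Smap lam p b i '' E ∩ Smap lam p b j '' E = ∅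

/-- Group law on `ℤ × ℝ`: `(p₁,c₁)·(p₂,c₂) = (p₁+p₂, λ^{p₁} c₂ + c₁)`. -/
def gmul (lam : ℝ) (u v : ℤ × ℝ) : ℤ × ℝ := (u.1 + v.1, lam ^ u.1 * v.2 + u.2)

/-- Inverse for the group law: `(p,c)⁻¹ = (−p, −λ^{−p} c)`. -/
def ginv (lam : ℝ) (u : ℤ × ℝ) : ℤ × ℝ := (-u.1, -(lam ^ (-u.1) * u.2))

/-- The group element `(p_σ, b_σ)` associated to a finite word `σ`. -/
def elem (lam : ℝ) (p : Fin m → ℕ) (b : Fin m → ℝ) (σ : List (Fin m)) : ℤ × ℝ :=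
  ((wordP p σ : ℤ), wordB lam p b σ)

/-- The sequence `(q_k, c_k)` with the recursive structure w.r.t. `({α_k}, {β_k})`:
`recSeq … k = (q_{k+1}, c_{k+1})`, i.e. index `k` corresponds to `(q_{k+1}, c_{k+1})`. -/
def recSeq (lam : ℝ) (p : Fin m → ℕ) (b : Fin m → ℝ) (α β : ℕ → List (Fin m)) : ℕ → ℤ × ℝ
  | 0 => gmul lam (ginv lam (elem lam p b (β 0))) (elem lam p b (α 0))
  | (k+1) => gmul lam (ginv lam (elem lam p b (β (k+1))))
      (gmul lam (recSeq lam p b α β k) (elem lam p b (α (k+1))))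

/-- The edge relation of the directed graph `G` on `Ξ`. -/
def edge (lam : ℝ) (p : Fin m → ℕ) (b : Fin m → ℝ) (T : ℕ) (u v : ℤ × ℝ) : Prop :=
  u ∈ Xi lam b T ∧ v ∈ Xi lam b T ∧
    ∃ α β : List (Fin m), 1 ≤ wordP p α ∧ wordP p α ≤ 2 * T - 1 ∧
      1 ≤ wordP p β ∧ wordP p β ≤ 2 * T - 1 ∧
      v.1 = (wordP p α : ℤ) + u.1 - (wordP p β : ℤ) ∧
      v.2 = lam ^ (-(wordP p β : ℤ)) * u.2 + lam ^ (u.1 - (wordP p β : ℤ)) * wordB lam p b α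
        - lam ^ (-(wordP p β : ℤ)) * wordB lam p b β

/-- `Λ = Ξ ∩ {(p_j − p_i, λ^{−p_i}(b_j − b_i)) : i ≠ j}`. -/
def Lam (lam : ℝ) (p : Fin m → ℕ) (b : Fin m → ℝ) (T : ℕ) : Set (ℤ × ℝ) :=
  Xi lam b T ∩ {v | ∃ i j : Fin m, i ≠ j ∧
    v = ((p j : ℤ) - (p i : ℤ), lam ^ (-(p i : ℤ)) * (b j - b i))}

/-- The length-`k` prefix of an infinite word `ω`. -/
def prefixList (ω : ℕ → Fin m) (k : ℕ) : List (Fin m) := (List.range k).map ω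

lemma SW_cons (lam : ℝ) (p : Fin m → ℕ) (b : Fin m → ℝ) (i : Fin m) (A : List (Fin m)) (x : ℝ) :
    SW lam p b (i :: A) x = lam ^ p i * SW lam p b A x + b i := rfl

lemma wordP_cons (p : Fin m → ℕ) (i : Fin m) (A : List (Fin m)) :
    wordP p (i :: A) = p i + wordP p A := by simp [wordP]

lemma wordP_append (p : Fin m → ℕ) (A D : List (Fin m)) :
    wordP p (A ++ D) = wordP p A + wordP p D := by simp [wordP]

lemma wordB_cons (lam : ℝ) (p : Fin m → ℕ) (b : Fin m → ℝ) (i : Fin m) (A : List (Fin m)) :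
    wordB lam p b (i :: A) = lam ^ p i * wordB lam p b A + b i := rfl

lemma wordB_nil (lam : ℝ) (p : Fin m → ℕ) (b : Fin m → ℝ) : wordB lam p b [] = 0 := rfl

lemma SW_eq (lam : ℝ) (p : Fin m → ℕ) (b : Fin m → ℝ) (A : List (Fin m)) (x : ℝ) :
    SW lam p b A x = lam ^ wordP p A * x + wordB lam p b A := by
  induction A with
  | nil => simp [SW, wordP, wordB]
  | cons i A ih => rw [SW_cons, ih, wordB_cons, wordP_cons]; ring

lemma SW_append (lam : ℝ) (p : Fin m → ℕ) (b : Fin m → ℝ) (A D : List (Fin m)) (x : ℝ) :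
    SW lam p b (A ++ D) x = SW lam p b A (SW lam p b D x) := by
  induction A with
  | nil => rfl
  | cons i A ih => rw [List.cons_append, SW_cons, ih, SW_cons]

lemma wordB_append (lam : ℝ) (p : Fin m → ℕ) (b : Fin m → ℝ) (A D : List (Fin m)) :
    wordB lam p b (A ++ D) = lam ^ wordP p A * wordB lam p b D + wordB lam p b A := by
  rw [wordB, SW_append, SW_eq]; rfl

lemma SW_mem (lam : ℝ) (p : Fin m → ℕ) (b : Fin m → ℝ) (E : Set ℝ)
    (hEfix : E = ⋃ i, Smap lam p b i '' E) (A : List (Fin m)) (x : ℝ) (hx : x ∈ E) :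
    SW lam p b A x ∈ E := by
  induction A with
  | nil => exact hx
  | cons i A ih =>
    rw [hEfix]
    exact Set.mem_iUnion.2 ⟨i, _, ih, rfl⟩

lemma exists_letter (lam : ℝ) (p : Fin m → ℕ) (b : Fin m → ℝ) (E : Set ℝ)
    (hEfix : E = ⋃ i, Smap lam p b i '' E) (x : ℝ) (hx : x ∈ E) :
    ∃ i, ∃ y ∈ E, x = SW lam p b [i] y := by
  rw [hEfix] at hx
  obtain ⟨i, y, hy, h⟩ := Set.mem_iUnion.1 hx
  exact ⟨i, y, hy, h.symm⟩

/-- Every point of the attractor has a coding prefix of prescribed size. -/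
lemma exists_prefix (lam : ℝ) (p : Fin m → ℕ) (hp : ∀ i, 1 ≤ p i) (b : Fin m → ℝ) (T : ℕ)
    (hT : ∀ i, p i ≤ T) (E : Set ℝ)
    (hEfix : E = ⋃ i, Smap lam p b i '' E) (x : ℝ) (hx : x ∈ E) (N : ℕ) :
    ∃ A : List (Fin m), N + 1 ≤ wordP p A ∧ wordP p A ≤ N + T ∧ ∃ y ∈ E, x = SW lam p b A y := by
  induction N with
  | zero =>
    obtain ⟨i, y, hy, h⟩ := exists_letter lam p b E hEfix x hx
    refine ⟨[i], ?_, ?_, y, hy, h⟩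
    · simpa [wordP] using hp i
    · simpa [wordP] using hT i
  | succ N ih =>
    obtain ⟨A, h1, h2, y, hy, h⟩ := ih
    by_cases hA : N + 1 + 1 ≤ wordP p A
    · exact ⟨A, hA, by omega, y, hy, h⟩
    · obtain ⟨i, z, hz, h'⟩ := exists_letter lam p b E hEfix y hy
      have e : wordP p (A ++ [i]) = wordP p A + p i := by simp [wordP]
      have := hp i
      have := hT i
      refine ⟨A ++ [i], by omega, by omega, z, hz, ?_⟩
      rw [SW_append, ← h', h]

/-- The translation part as a polynomial in `lam`. -/
lemma exists_poly (lam : ℝ) (p : Fin m → ℕ) (hp : ∀ i, 1 ≤ p i) (b : Fin m → ℝ)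
    (A : List (Fin m)) :
    ∃ U : ℝ[X], (∀ n, U.coeff n ∈ Bset b) ∧ (∀ n, wordP p A ≤ n → U.coeff n = 0) ∧
      U.eval lam = wordB lam p b A := by
  induction A with
  | nil => exact ⟨0, by simp [Bset], by simp, by simp [wordB_nil]⟩
  | cons i A ih =>
    obtain ⟨U, h1, h2, h3⟩ := ih
    have hi := hp i
    refine ⟨X ^ p i * U + C (b i), ?_, ?_, ?_⟩
    · intro n
      rw [coeff_add, coeff_X_pow_mul', coeff_C]
      by_cases hn : n = 0
      · subst hn
        rw [if_neg (by omega), if_pos rfl, zero_add]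
        exact Or.inr ⟨i, rfl⟩
      · rw [if_neg hn, add_zero]
        split_ifs
        · exact h1 _
        · exact Or.inl rfl
    · intro n hn
      rw [wordP_cons] at hn
      rw [coeff_add, coeff_X_pow_mul', coeff_C, if_neg (by omega : ¬ n = 0), if_pos (by omega),
        h2 _ (by omega), add_zero]
    · simp [h3, wordB_cons]

lemma poly_cond (lam : ℝ) (hlam0 : 0 < lam) (p : Fin m → ℕ) (hp : ∀ i, 1 ≤ p i) (b : Fin m → ℝ)
    (T : ℕ) (hT1 : 1 ≤ T) (A D : List (Fin m)) (hD : 1 ≤ wordP p D)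
    (hAD : wordP p A + 1 ≤ wordP p D + T) (c : ℝ)
    (hc : lam ^ wordP p D * c = wordB lam p b A - wordB lam p b D) :
    ∃ R : ℝ[X], (∀ n, R.coeff n ∈ BB b) ∧ lam ^ (2 - (T : ℤ)) * c = R.eval lam⁻¹ := by
  obtain ⟨U, hU1, hU2, hU3⟩ := exists_poly lam p hp b A
  obtain ⟨V, hV1, hV2, hV3⟩ := exists_poly lam p hp b D
  obtain ⟨N, hN⟩ : ∃ N, N + 2 = wordP p D + T := ⟨wordP p D + T - 2, by omega⟩
  refine ⟨reflect N (U - V), ?_, ?_⟩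
  · intro n
    rw [coeff_reflect, coeff_sub]
    exact ⟨_, hU1 _, _, hV1 _, rfl⟩
  · have hdeg : (U - V).natDegree ≤ N := by
      rw [natDegree_le_iff_coeff_eq_zero]
      intro n hn
      rw [coeff_sub, hU2 n (by omega), hV2 n (by omega), sub_zero]
    have key : (reflect N (U - V)).eval lam⁻¹ * lam ^ N = (U - V).eval lam := by
      letI : Invertible lam := invertibleOfNonzero hlam0.ne'
      have := eval₂_reflect_mul_pow (RingHom.id ℝ) lam N (U - V) hdeg
      rw [invOf_eq_inv] at this
      exact this
    rw [eval_sub, hU3, hV3, ← hc] at key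
    have hl : lam ^ N ≠ 0 := pow_ne_zero _ hlam0.ne'
    have e : lam ^ wordP p D = lam ^ (2 - (T : ℤ)) * lam ^ N := by
      rw [← zpow_natCast, ← zpow_natCast, ← zpow_add₀ hlam0.ne']
      congr 1
      omega
    rw [e] at key
    apply mul_right_cancel₀ hl
    rw [key]; ring

lemma bmax_bound (b : Fin m → ℝ) (i : Fin m) : |b i| ≤ bmax b :=
  le_ciSup (f := fun i => |b i|) (Set.finite_range _).bddAbove i

lemma E_bound (lam : ℝ) (hlam0 : 0 < lam) (hlam1 : lam < 1) (p : Fin m → ℕ) (hp : ∀ i, 1 ≤ p i)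
    (b : Fin m → ℝ) (E : Set ℝ) (hEc : IsCompact E)
    (hEfix : E = ⋃ i, Smap lam p b i '' E) (x : ℝ) (hx : x ∈ E) :
    |x| ≤ bmax b / (1 - lam) := by
  obtain ⟨z, hz, hmax⟩ := hEc.exists_isMaxOn ⟨x, hx⟩ (continuous_abs.continuousOn)
  have hmax' : ∀ y ∈ E, |y| ≤ |z| := fun y hy => hmax hy
  refine (hmax' x hx).trans ?_
  rw [le_div_iff₀ (by linarith)]
  obtain ⟨i, y, hy, h⟩ := exists_letter lam p b E hEfix z hz
  have h2 : z = lam ^ p i * y + b i := h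
  have h3 : |z| ≤ lam * |z| + bmax b := by
    calc |z| = |lam ^ p i * y + b i| := by rw [← h2]
      _ ≤ |lam ^ p i * y| + |b i| := abs_add_le _ _
      _ = lam ^ p i * |y| + |b i| := by rw [abs_mul, abs_of_pos (pow_pos hlam0 _)]
      _ ≤ lam * |z| + bmax b := by
        have e1 : lam ^ p i ≤ lam := by
          simpa using pow_le_pow_of_le_one hlam0.le hlam1.le (hp i)
        exact add_le_add (mul_le_mul e1 (hmax' y hy) (abs_nonneg _) hlam0.le) (bmax_bound b i)
  linarith

/-- The states reached when two codings of a common point are compared. -/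
def Good (lam : ℝ) (p : Fin m → ℕ) (b : Fin m → ℝ) (T : ℕ) (E : Set ℝ) (v : ℤ × ℝ) : Prop :=
  |v.1| ≤ (T : ℤ) - 1 ∧ ∃ A D : List (Fin m), 1 ≤ wordP p D ∧
    v.1 = (wordP p A : ℤ) - (wordP p D : ℤ) ∧
    lam ^ wordP p D * v.2 = wordB lam p b A - wordB lam p b D ∧
    ∃ x ∈ E, ∃ y ∈ E, SW lam p b A x = SW lam p b D y

lemma Good.mem_Xi (lam : ℝ) (hlam0 : 0 < lam) (hlam1 : lam < 1) (p : Fin m → ℕ)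
    (hp : ∀ i, 1 ≤ p i) (b : Fin m → ℝ) (T : ℕ) (E : Set ℝ) (hEc : IsCompact E)
    (hEfix : E = ⋃ i, Smap lam p b i '' E) (v : ℤ × ℝ) (hv : Good lam p b T E v) :
    v ∈ Xi lam b T := by
  obtain ⟨h1, A, D, hD, hq, hc, x, hx, y, hy, hxy⟩ := hv
  have h1' := abs_le.1 h1
  refine ⟨h1, ?_, poly_cond lam hlam0 p hp b T (by omega) A D hD (by omega) v.2 hc⟩
  have hne := hlam0.ne'
  have e : lam ^ wordP p A = lam ^ wordP p D * lam ^ v.1 := by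
    rw [← zpow_natCast, ← zpow_natCast, ← zpow_add₀ hne, hq]
    congr 1
    ring
  rw [SW_eq, SW_eq, e] at hxy
  have hv2 : v.2 = y - lam ^ v.1 * x := by
    apply mul_left_cancel₀ (pow_ne_zero (wordP p D) hne)
    rw [hc]; linarith
  have hle : lam ^ v.1 ≤ lam ^ (1 - (T : ℤ)) :=
    zpow_le_zpow_right_of_le_one₀ hlam0 hlam1.le (by omega)
  have bx := E_bound lam hlam0 hlam1 p hp b E hEc hEfix x hx
  have bY := E_bound lam hlam0 hlam1 p hp b E hEc hEfix y hy
  have hpos : 0 < lam ^ v.1 := zpow_pos hlam0 _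
  calc |v.2| = |y - lam ^ v.1 * x| := by rw [hv2]
    _ ≤ |y| + |lam ^ v.1 * x| := abs_sub _ _
    _ = |y| + lam ^ v.1 * |x| := by rw [abs_mul, abs_of_pos hpos]
    _ ≤ bmax b / (1 - lam) + lam ^ (1 - (T : ℤ)) * (bmax b / (1 - lam)) :=
        add_le_add bY (mul_le_mul hle bx (abs_nonneg _) (zpow_pos hlam0 _).le)
    _ = (1 + lam ^ (1 - (T : ℤ))) * bmax b / (1 - lam) := by ring

lemma Good.step (lam : ℝ) (hlam0 : 0 < lam) (hlam1 : lam < 1) (p : Fin m → ℕ)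
    (hp : ∀ i, 1 ≤ p i) (b : Fin m → ℝ) (T : ℕ) (hT : ∀ i, p i ≤ T) (E : Set ℝ)
    (hEc : IsCompact E)
    (hEfix : E = ⋃ i, Smap lam p b i '' E) (v : ℤ × ℝ) (hv : Good lam p b T E v) :
    ∃ w, Good lam p b T E w ∧ edge lam p b T v w := by
  have hvX := hv.mem_Xi lam hlam0 hlam1 p hp b T E hEc hEfix
  obtain ⟨h1, A, D, hD, hq, hc, x, hx, y, hy, hxy⟩ := hv
  have h1' := abs_le.1 h1
  have hne := hlam0.ne'
  obtain ⟨α, β, hα1, hα2, hβ1, hβ2, hw, x', hx', y', hy', ex, ey⟩ :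
      ∃ α β : List (Fin m), 1 ≤ wordP p α ∧ wordP p α ≤ 2 * T - 1 ∧
      1 ≤ wordP p β ∧ wordP p β ≤ 2 * T - 1 ∧
      |(wordP p α : ℤ) + v.1 - (wordP p β : ℤ)| ≤ (T : ℤ) - 1 ∧
      ∃ x' ∈ E, ∃ y' ∈ E, x = SW lam p b α x' ∧ y = SW lam p b β y' := by
    rcases le_total 0 v.1 with h0 | h0
    · obtain ⟨α, a1, a2, x', hx', ex⟩ := exists_prefix lam p hp b T hT E hEfix x hx 0
      obtain ⟨β, b1, b2, y', hy', ey⟩ := exists_prefix lam p hp b T hT E hEfix y hy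
        ((wordP p α : ℤ) + v.1 - T).toNat
      exact ⟨α, β, by omega, by omega, by omega, by omega, abs_le.2 ⟨by omega, by omega⟩,
        x', hx', y', hy', ex, ey⟩
    · obtain ⟨β, b1, b2, y', hy', ey⟩ := exists_prefix lam p hp b T hT E hEfix y hy 0
      obtain ⟨α, a1, a2, x', hx', ex⟩ := exists_prefix lam p hp b T hT E hEfix x hx
        ((wordP p β : ℤ) - v.1 - T).toNat
      exact ⟨α, β, by omega, by omega, by omega, by omega, abs_le.2 ⟨by omega, by omega⟩,
        x', hx', y', hy', ex, ey⟩
  set w : ℤ × ℝ := ((wordP p α : ℤ) + v.1 - (wordP p β : ℤ),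
    lam ^ (-(wordP p β : ℤ)) * v.2 + lam ^ (v.1 - (wordP p β : ℤ)) * wordB lam p b α
        - lam ^ (-(wordP p β : ℤ)) * wordB lam p b β) with hwdef
  have hg : Good lam p b T E w := by
    refine ⟨hw, A ++ α, D ++ β, ?_, ?_, ?_, x', hx', y', hy', ?_⟩
    · rw [wordP_append]; omega
    · rw [wordP_append, wordP_append]; simp only [hwdef]; push_cast; omega
    · have e : lam ^ wordP p A = lam ^ wordP p D * lam ^ v.1 := by
        rw [← zpow_natCast, ← zpow_natCast, ← zpow_add₀ hne, hq]
        congr 1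
        ring
      have hb : lam ^ wordP p β ≠ 0 := pow_ne_zero _ hne
      rw [wordB_append, wordB_append, wordP_append, e, pow_add]
      simp only [hwdef]
      rw [zpow_sub₀ hne, zpow_neg, zpow_natCast]
      field_simp
      linear_combination hc
    · rw [SW_append, SW_append, ← ex, ← ey, hxy]
  exact ⟨w, hg, hvX, hg.mem_Xi lam hlam0 hlam1 p hp b T E hEc hEfix, α, β, hα1, hα2, hβ1, hβ2,
    rfl, rfl⟩

/-- The words accumulated along a path. -/
lemma path_words (lam : ℝ) (hlam0 : 0 < lam) (p : Fin m → ℕ) (b : Fin m → ℝ) (T : ℕ)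
    (f : ℕ → ℤ × ℝ) (i j : Fin m)
    (h0 : f 0 = ((p j : ℤ) - (p i : ℤ), lam ^ (-(p i : ℤ)) * (b j - b i)))
    (hf : ∀ n, edge lam p b T (f n) (f (n + 1))) (n : ℕ) :
    ∃ A D : List (Fin m), n ≤ wordP p (j :: A) ∧ n ≤ wordP p (i :: D) ∧
      (f n).1 = (wordP p (j :: A) : ℤ) - (wordP p (i :: D) : ℤ) ∧
      lam ^ wordP p (i :: D) * (f n).2 = wordB lam p b (j :: A) - wordB lam p b (i :: D) := by
  have hne := hlam0.ne'
  induction n with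
  | zero =>
    refine ⟨[], [], by simp, by simp, by simp [h0, wordP], ?_⟩
    have : lam ^ p i ≠ 0 := pow_ne_zero _ hne
    simp [h0, wordP, wordB_cons, wordB_nil]
    field_simp
  | succ n ih =>
    obtain ⟨A, D, hA, hD, hq, hc⟩ := ih
    obtain ⟨-, -, α, β, hα1, hα2, hβ1, hβ2, e1, e2⟩ := hf n
    refine ⟨A ++ α, D ++ β, ?_, ?_, ?_, ?_⟩
    · rw [← List.cons_append, wordP_append]; omega
    · rw [← List.cons_append, wordP_append]; omega
    · rw [← List.cons_append, wordP_append, ← List.cons_append, wordP_append, e1]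
      push_cast; omega
    · rw [← List.cons_append, ← List.cons_append]
      have e : lam ^ wordP p (j :: A) = lam ^ wordP p (i :: D) * lam ^ (f n).1 := by
        rw [← zpow_natCast, ← zpow_natCast, ← zpow_add₀ hne, hq]
        congr 1
        ring
      have hb : lam ^ wordP p β ≠ 0 := pow_ne_zero _ hne
      rw [wordB_append, wordB_append, wordP_append, e, pow_add, e2]
      rw [zpow_sub₀ hne, zpow_neg, zpow_natCast]
      field_simp
      linear_combination hc

theorem stmt12 (lam : ℝ) (hlam0 : 0 < lam) (hlam1 : lam < 1)
    (hPisot : IsPisot lam⁻¹)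
    {m : ℕ} (hm : 2 ≤ m) (p : Fin m → ℕ) (hp : ∀ i, 1 ≤ p i)
    (b : Fin m → ℝ) (hbZ : ∀ i, ∃ z : ℤ, b i = (z : ℝ))
    (T : ℕ) (hT : T = Finset.univ.sup p)
    (E : Set ℝ) (hEc : IsCompact E) (hEne : E.Nonempty)
    (hEfix : E = ⋃ i, Smap lam p b i '' E) :
    ¬ SSC lam p b E ↔
      ∃ v ∈ Lam lam p b T, ∃ f : ℕ → ℤ × ℝ,
        f 0 = v ∧ (∀ n : ℕ, f n ∈ Xi lam b T) ∧
        ∀ n : ℕ, edge lam p b T (f n) (f (n + 1)) := by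
  have hTp : ∀ i, p i ≤ T := fun i => hT ▸ Finset.le_sup (Finset.mem_univ i)
  have hne := hlam0.ne'
  constructor
  · intro h
    simp only [SSC, not_forall] at h
    obtain ⟨i, j, hij, h⟩ := h
    obtain ⟨z, ⟨y, hy, ey⟩, ⟨x, hx, ex⟩⟩ := Set.nonempty_iff_ne_empty.2 h
    have hg : Good lam p b T E ((p j : ℤ) - (p i : ℤ), lam ^ (-(p i : ℤ)) * (b j - b i)) := by
      have hi := hp i
      have hj := hp j
      have hi' := hTp i
      have hj' := hTp j
      refine ⟨abs_le.2 ⟨?_, ?_⟩, [j], [i], ?_, ?_, ?_, x, hx, y, hy, ex.trans ey.symm⟩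
      · simp only; omega
      · simp only; omega
      · simpa [wordP] using hi
      · simp [wordP]
      · have : lam ^ p i ≠ 0 := pow_ne_zero _ hne
        simp [wordP, wordB_cons, wordB_nil]
        field_simp
    choose g hg1 hg2 using fun v : {v // Good lam p b T E v} =>
      Good.step lam hlam0 hlam1 p hp b T hTp E hEc hEfix v.1 v.2
    let F : ℕ → {v // Good lam p b T E v} :=
      fun n => Nat.rec ⟨_, hg⟩ (fun _ v => ⟨g v, hg1 v⟩) n
    have hX : ∀ n, (F n).1 ∈ Xi lam b T := fun n =>
      (F n).2.mem_Xi lam hlam0 hlam1 p hp b T E hEc hEfix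
    exact ⟨_, ⟨hX 0, i, j, hij, rfl⟩, fun n => (F n).1, rfl, hX, fun n => hg2 (F n)⟩
  · rintro ⟨v, ⟨-, i, j, hij, hv⟩, f, hf0, hfX, hf⟩ hS
    have hdis := hS i j hij
    obtain ⟨x0, hx0⟩ := hEne
    have hK : IsCompact ((fun q : ℝ × ℝ => Smap lam p b j q.1 - Smap lam p b i q.2) '' (E ×ˢ E)) := by
      apply (hEc.prod hEc).image
      unfold Smap
      fun_prop
    set M := (1 + lam ^ (1 - (T : ℤ))) * bmax b / (1 - lam) with hM
    have hex : ∀ n : ℕ, ∃ d ∈ ((fun q : ℝ × ℝ => Smap lam p b j q.1 - Smap lam p b i q.2) ''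
        (E ×ˢ E)), |d| ≤ lam ^ n * (2 * |x0| + M) := by
      intro n
      obtain ⟨A, D, hA, hD, -, hc⟩ := path_words lam hlam0 p b T f i j (hf0.trans hv) hf n
      have hfn : |(f n).2| ≤ M := (hfX n).2.1
      refine ⟨_, ⟨(SW lam p b A x0, SW lam p b D x0),
        ⟨SW_mem lam p b E hEfix A x0 hx0, SW_mem lam p b E hEfix D x0 hx0⟩, rfl⟩, ?_⟩
      have e : Smap lam p b j (SW lam p b A x0) - Smap lam p b i (SW lam p b D x0)
          = lam ^ wordP p (j :: A) * x0 - lam ^ wordP p (i :: D) * x0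
            + lam ^ wordP p (i :: D) * (f n).2 := by
        have e1 : Smap lam p b j (SW lam p b A x0) = SW lam p b (j :: A) x0 := rfl
        have e2 : Smap lam p b i (SW lam p b D x0) = SW lam p b (i :: D) x0 := rfl
        rw [e1, e2, SW_eq, SW_eq, hc]; ring
      have pA : lam ^ wordP p (j :: A) ≤ lam ^ n := pow_le_pow_of_le_one hlam0.le hlam1.le hA
      have pD : lam ^ wordP p (i :: D) ≤ lam ^ n := pow_le_pow_of_le_one hlam0.le hlam1.le hD
      simp only
      rw [e]
      have t1 : |lam ^ wordP p (j :: A) * x0| ≤ lam ^ n * |x0| := by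
        rw [abs_mul, abs_of_pos (pow_pos hlam0 _)]
        exact mul_le_mul_of_nonneg_right pA (abs_nonneg _)
      have t2 : |lam ^ wordP p (i :: D) * x0| ≤ lam ^ n * |x0| := by
        rw [abs_mul, abs_of_pos (pow_pos hlam0 _)]
        exact mul_le_mul_of_nonneg_right pD (abs_nonneg _)
      have t3 : |lam ^ wordP p (i :: D) * (f n).2| ≤ lam ^ n * M := by
        rw [abs_mul, abs_of_pos (pow_pos hlam0 _)]
        exact mul_le_mul pD hfn (abs_nonneg _) (pow_pos hlam0 _).le
      have s1 := abs_add_le (lam ^ wordP p (j :: A) * x0 - lam ^ wordP p (i :: D) * x0)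
        (lam ^ wordP p (i :: D) * (f n).2)
      have s2 := abs_sub (lam ^ wordP p (j :: A) * x0) (lam ^ wordP p (i :: D) * x0)
      linarith
    choose d hd1 hd2 using hex
    have hlim : Tendsto d atTop (nhds 0) := by
      apply squeeze_zero_norm (a := fun n => lam ^ n * (2 * |x0| + M)) hd2
      simpa using (tendsto_pow_atTop_nhds_zero_of_lt_one hlam0.le hlam1).mul_const (2 * |x0| + M)
    obtain ⟨⟨x, y⟩, ⟨hx, hy⟩, hxy⟩ :=
      hK.isClosed.mem_of_tendsto hlim (Eventually.of_forall hd1)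
    have hmem : Smap lam p b j x ∈ Smap lam p b i '' E ∩ Smap lam p b j '' E :=
      ⟨⟨y, hy, (sub_eq_zero.1 hxy).symm⟩, ⟨x, hx, rfl⟩⟩
    rw [hdis] at hmem
    exact hmem

end PVOSC
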